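/- arXiv:2310.11611 — 8 statements merged into one kernel-verified Lean document; each statement's English description precedes it below -/
import Mathlib

section
/- For any x, y ∈ ℝⁿ with n ≥ 2 and any 1 ≤ m ≤ n, the variance of the pruning estimator over a uniformly random size-m subset S of {1,…,n} is Var[(n/m)·∑_{i∈S} x_i y_i] = (n/m − 1)·∑_{i=1}ⁿ x_i² y_i² + ((m−n)/(m(n−1)))·∑_{i≠j} x_i y_i x_j y_j. -/
open Finset

lemma pr_c1 (n m : ℕ) (hn : 2 ≤ n) (hm1 : 1 ≤ m) (i : Fin n) :
    ((#{S ∈ powersetCard m (univ : Finset (Fin n)) | i ∈ S} : ℕ) : ℝ)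
      = (n.choose m : ℝ) * m / n := by
  have h := card_filter_powersetCard_subset {i} (univ : Finset (Fin n)) m (subset_univ _)
    (by simpa using hm1)
  simp only [singleton_subset_iff, card_univ, Fintype.card_fin, card_singleton] at h
  rw [h]
  obtain ⟨k, rfl⟩ : ∃ k, m = k + 1 := ⟨m - 1, by omega⟩
  obtain ⟨l, rfl⟩ : ∃ l, n = l + 1 := ⟨n - 1, by omega⟩
  have h2 := Nat.add_one_mul_choose_eq l k
  have h3 : ((l : ℝ) + 1) * (l.choose k) = ((l+1).choose (k+1)) * ((k : ℝ) + 1) := by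
    exact_mod_cast h2
  rw [eq_div_iff (by positivity)]
  push_cast
  linarith

lemma pr_c2 (n m : ℕ) (hn : 2 ≤ n) (hm1 : 1 ≤ m) (i j : Fin n) (hij : i ≠ j) :
    ((#{S ∈ powersetCard m (univ : Finset (Fin n)) | i ∈ S ∧ j ∈ S} : ℕ) : ℝ)
      = (n.choose m : ℝ) * m * (m - 1) / (n * (n - 1)) := by
  obtain ⟨l, rfl⟩ : ∃ l, n = l + 2 := ⟨n - 2, by omega⟩
  rcases Nat.lt_or_ge m 2 with hm | hm
  · obtain rfl : m = 1 := by omega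
    rw [filter_false_of_mem]
    · simp
    · rintro S hS ⟨h1, h2⟩
      rw [mem_powersetCard_univ, card_eq_one] at hS
      obtain ⟨a, rfl⟩ := hS
      simp at h1 h2
      exact hij (h1.trans h2.symm)
  have h := card_filter_powersetCard_subset {i, j} (univ : Finset (Fin (l+2))) m (subset_univ _)
    (by rw [card_pair hij]; exact hm)
  simp only [insert_subset_iff, singleton_subset_iff, card_univ, Fintype.card_fin,
    card_pair hij] at h
  rw [h]
  obtain ⟨k, rfl⟩ : ∃ k, m = k + 2 := ⟨m - 2, by omega⟩
  have h3 : ((l : ℝ) + 1) * (l.choose k) = ((l+1).choose (k+1)) * ((k : ℝ) + 1) := by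
    exact_mod_cast Nat.add_one_mul_choose_eq l k
  have h4 : ((l : ℝ) + 1 + 1) * ((l+1).choose (k+1))
      = ((l+2).choose (k+2)) * ((k : ℝ) + 1 + 1) := by
    exact_mod_cast Nat.add_one_mul_choose_eq (l+1) (k+1)
  have h5 : ((l + 2 : ℕ) : ℝ) * (((l + 2 : ℕ) : ℝ) - 1) ≠ 0 := by
    have : (((l + 2 : ℕ) : ℝ) - 1) = l + 1 := by push_cast; ring
    rw [this]; positivity
  rw [eq_div_iff h5]
  push_cast
  linear_combination ((l : ℝ) + 2) * h3 + ((k : ℝ) + 1) * h4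

lemma pr_s1 (n m : ℕ) (hn : 2 ≤ n) (hm1 : 1 ≤ m) (a : Fin n → ℝ) :
    ∑ S ∈ powersetCard m (univ : Finset (Fin n)), ∑ i ∈ S, a i
      = (n.choose m : ℝ) * m / n * ∑ i, a i := by
  have : ∀ S : Finset (Fin n), ∑ i ∈ S, a i = ∑ i, if i ∈ S then a i else 0 := by
    intro S; simp
  simp_rw [this]
  rw [sum_comm, mul_sum]
  refine sum_congr rfl fun i _ => ?_
  rw [← sum_filter, sum_const, nsmul_eq_mul, pr_c1 n m hn hm1]; simp

lemma pr_s2 (n m : ℕ) (hn : 2 ≤ n) (hm1 : 1 ≤ m) (a : Fin n → ℝ) :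
    ∑ S ∈ powersetCard m (univ : Finset (Fin n)), (∑ i ∈ S, a i) ^ 2
      = (n.choose m : ℝ) * m / n * ∑ i, a i ^ 2
        + (n.choose m : ℝ) * m * (m - 1) / (n * (n - 1)) *
          ∑ i, ∑ j ∈ univ \ {i}, a i * a j := by
  have : ∀ S : Finset (Fin n), (∑ i ∈ S, a i) ^ 2
      = ∑ i, ∑ j, if i ∈ S ∧ j ∈ S then a i * a j else 0 := by
    intro S
    have : ∑ i ∈ S, a i = ∑ i, if i ∈ S then a i else 0 := by simp
    rw [this, sq, sum_mul_sum]
    refine sum_congr rfl fun i _ => sum_congr rfl fun j _ => ?_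
    by_cases h1 : i ∈ S <;> by_cases h2 : j ∈ S <;> simp [h1, h2]
  simp_rw [this]
  rw [sum_comm, mul_sum, mul_sum, ← sum_add_distrib]
  refine sum_congr rfl fun i _ => ?_
  rw [sum_comm, ← sum_sdiff (subset_univ {i}), sum_singleton, add_comm, mul_sum]
  congr 1
  · simp only [and_self]
    rw [← sum_filter, sum_const, nsmul_eq_mul, pr_c1 n m hn hm1, sq]
  · refine sum_congr rfl fun j hj => ?_
    have hij : i ≠ j := by
      simp at hj; exact fun h => hj h.symm
    rw [← sum_filter, sum_const, nsmul_eq_mul, pr_c2 n m hn hm1 i j hij]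

lemma pr_sq (n : ℕ) (a : Fin n → ℝ) :
    (∑ i, a i) ^ 2 = ∑ i, a i ^ 2 + ∑ i, ∑ j ∈ univ \ {i}, a i * a j := by
  rw [sq, sum_mul_sum, ← sum_add_distrib]
  refine sum_congr rfl fun i _ => ?_
  rw [← sum_sdiff (subset_univ {i}), sum_singleton, add_comm, sq]

/-- Variance of the pruning estimator of the inner product over a uniformly random
size-`m` subset `S` of `{1,…,n}`:
`Var[(n/m)·∑_{i∈S} x_i y_i] = (n/m − 1)·∑ x_i² y_i² + ((m−n)/(m(n−1)))·∑_{i≠j} x_i y_i x_j y_j`. -/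
theorem pruning_estimator_variance (n m : ℕ) (hn : 2 ≤ n) (hm1 : 1 ≤ m) (hmn : m ≤ n)
    (x y : Fin n → ℝ) :
    (let est : Finset (Fin n) → ℝ := fun S => ((n : ℝ) / (m : ℝ)) * ∑ i ∈ S, x i * y i
     let 𝒮 : Finset (Finset (Fin n)) := Finset.powersetCard m (Finset.univ : Finset (Fin n))
     let μ : ℝ := (∑ S ∈ 𝒮, est S) / (𝒮.card : ℝ)
     (∑ S ∈ 𝒮, (est S - μ) ^ 2) / (𝒮.card : ℝ))
      = ((n : ℝ) / (m : ℝ) - 1) * ∑ i, (x i) ^ 2 * (y i) ^ 2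
        + (((m : ℝ) - (n : ℝ)) / ((m : ℝ) * ((n : ℝ) - 1))) *
            ∑ i, ∑ j ∈ Finset.univ \ {i}, x i * y i * (x j * y j) := by
  dsimp only
  have hC : (0 : ℝ) < (n.choose m : ℝ) := by exact_mod_cast Nat.choose_pos hmn
  have hm : (0 : ℝ) < m := by exact_mod_cast hm1
  have hn2 : (2 : ℝ) ≤ n := by exact_mod_cast hn
  have hn0 : (n : ℝ) ≠ 0 := by positivity
  have hn1 : (n : ℝ) - 1 ≠ 0 := by linarith
  have e1 := pr_s1 n m hn hm1 (fun i => x i * y i)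
  have e2 := pr_s2 n m hn hm1 (fun i => x i * y i)
  have e3 := pr_sq n (fun i => x i * y i)
  simp only [mul_pow] at e2 e3
  simp only [← mul_sum, card_powersetCard, card_univ, Fintype.card_fin]
  rw [e1]
  simp only [sub_sq, mul_pow, sum_add_distrib, sum_sub_distrib, ← mul_sum, ← sum_mul, sum_const,
    card_powersetCard, card_univ, Fintype.card_fin, nsmul_eq_mul]
  simp only [← mul_sum] at e2 e3
  rw [e1, e2]
  generalize (∑ i, x i * y i) = T at *
  generalize (∑ i, x i ^ 2 * y i ^ 2) = Q at *
  generalize (∑ i, x i * y i * ∑ j ∈ univ \ {i}, x j * y j) = P at *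
  obtain rfl : P = T ^ 2 - Q := by linarith
  field_simp
  ring
end

section
/- The RPS estimator of the inner product is unbiased: for any x, y ∈ ℝⁿ, any fixed hash function h : {1,…,n} → {1,…,m}, and signs g(1),…,g(n) that are independent and uniformly distributed on {−1,+1}, E[∑_{i=1}ⁿ ∑_{i'=1}ⁿ x_i y_{i'} g(i) g(i') 1(h(i)=h(i'))] = ∑_{i=1}ⁿ x_i y_i. -/
open Finset

theorem rps_sign_sum (n : ℕ) (i j : Fin n) :
    (∑ s : Fin n → Bool, (if s i then (1 : ℝ) else -1) * (if s j then (1 : ℝ) else -1))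
      = if i = j then (2 : ℝ) ^ n else 0 := by
  split_ifs with hij
  · subst hij
    have : ∀ s : Fin n → Bool,
        (if s i then (1 : ℝ) else -1) * (if s i then (1 : ℝ) else -1) = 1 := by
      intro s
      cases s i <;> simp
    simp [this]
  · apply Finset.sum_involution (fun s _ => Function.update s i (!s i))
    · intro s _
      have hji : j ≠ i := fun e => hij e.symm
      simp only [Function.update_self, Function.update_of_ne hji]
      cases s i <;> cases s j <;> simp
    · intro s _ _ he
      have := congrFun he i
      simp at this
    · intro s _
      simp
    · intro s _
      simp

/-- The RPS estimator of the inner product is unbiased: for any `x, y ∈ ℝⁿ`, any fixed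
hash `h : {1,…,n} → {1,…,m}`, and i.i.d. uniform random signs `g(i) ∈ {−1,+1}`
(modelled by averaging over all sign assignments `s : Fin n → Bool`),
`E[∑_i ∑_{i'} x_i y_{i'} g(i) g(i') 1(h(i)=h(i'))] = ∑_i x_i y_i`. -/
theorem rps_estimator_unbiased (n m : ℕ) (x y : Fin n → ℝ) (h : Fin n → Fin m) :
    (∑ s : Fin n → Bool, ∑ i, ∑ i',
        x i * y i' * (if s i then (1 : ℝ) else -1) * (if s i' then (1 : ℝ) else -1) *
          (if h i = h i' then (1 : ℝ) else 0)) / ((2 : ℝ) ^ n)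
      = ∑ i, x i * y i := by
  rw [div_eq_iff (by positivity), Finset.sum_comm, Finset.sum_mul]
  refine Finset.sum_congr rfl fun i _ => ?_
  rw [Finset.sum_comm]
  have key : ∀ j : Fin n, (∑ s : Fin n → Bool,
      x i * y j * (if s i then (1 : ℝ) else -1) * (if s j then (1 : ℝ) else -1) *
          (if h i = h j then (1 : ℝ) else 0))
      = if i = j then x i * y i * 2 ^ n else 0 := by
    intro j
    have : (∑ s : Fin n → Bool,
      x i * y j * (if s i then (1 : ℝ) else -1) * (if s j then (1 : ℝ) else -1) *
          (if h i = h j then (1 : ℝ) else 0))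
        = (x i * y j * (if h i = h j then (1 : ℝ) else 0)) *
          ∑ s : Fin n → Bool, (if s i then (1 : ℝ) else -1) * (if s j then (1 : ℝ) else -1) := by
      rw [Finset.mul_sum]
      exact Finset.sum_congr rfl fun s _ => by ring
    rw [this, rps_sign_sum]
    by_cases hij : i = j
    · subst hij
      simp
    · simp [hij]
  simp only [key]
  simp
end

section
/- In the permuted-fold hash model with n = k·m (k ≥ 1 an integer) and n ≥ 2, for any two distinct indices i ≠ j in {1,…,n}, the probability that they collide satisfies P[π(i) mod m = π(j) mod m] = (n−m)/(m(n−1)), where π is a uniformly random permutation of {1,…,n}. -/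
open Finset

lemma aux_residue (n m k : ℕ) (hm : 0 < m) (hnm : n = k * m) (c : ℕ) :
    (Finset.univ.filter (fun b : Fin n => c % m = (b : ℕ) % m)).card = k := by
  have h1 : (Finset.univ.filter (fun b : Fin n => c % m = (b : ℕ) % m)).card
      = Nat.count (fun x => x ≡ c [MOD m]) n := by
    rw [Nat.count_eq_card_filter_range, Finset.card_filter, Finset.card_filter,
      ← Fin.sum_univ_eq_sum_range (fun x => if x ≡ c [MOD m] then 1 else 0)]
    refine Finset.sum_congr rfl fun x _ => ?_
    simp only [Nat.ModEq, eq_comm]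
  rw [h1, Nat.count_modEq_card _ hm, hnm]
  simp [Nat.mul_div_cancel _ hm]

lemma aux_sym (n m : ℕ) (i j b : Fin n) (hij : i ≠ j) (hib : i ≠ b) :
    (Finset.univ.filter
        (fun π : Equiv.Perm (Fin n) => (π i : ℕ) % m = (π b : ℕ) % m)).card =
    (Finset.univ.filter
        (fun π : Equiv.Perm (Fin n) => (π i : ℕ) % m = (π j : ℕ) % m)).card := by
  refine Finset.card_equiv (Equiv.mulRight (Equiv.swap j b)) fun π => ?_
  simp [Equiv.swap_apply_of_ne_of_ne hij hib]

/-- In the permuted-fold hash model with `n = k·m` (`k ≥ 1`) and `n ≥ 2`, for distinct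
indices `i ≠ j`, the collision probability over a uniformly random permutation `π` of
`{1,…,n}` satisfies `P[π(i) mod m = π(j) mod m] = (n−m)/(m(n−1))`. -/
theorem permuted_fold_collision_probability (n m k : ℕ) (hk : 1 ≤ k) (hnm : n = k * m)
    (hn : 2 ≤ n) (i j : Fin n) (hij : i ≠ j) :
    (((Finset.univ.filter
        (fun π : Equiv.Perm (Fin n) => (π i : ℕ) % m = (π j : ℕ) % m)).card : ℝ)) /
      ((Fintype.card (Equiv.Perm (Fin n))) : ℝ)
      = ((n : ℝ) - (m : ℝ)) / ((m : ℝ) * ((n : ℝ) - 1)) := by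
  have hm : 0 < m := by
    rcases Nat.eq_zero_or_pos m with h | h
    · subst h; omega
    · exact h
  have key : ∑ b : Fin n, (Finset.univ.filter
        (fun π : Equiv.Perm (Fin n) => (π i : ℕ) % m = (π b : ℕ) % m)).card
      = Fintype.card (Equiv.Perm (Fin n)) * k := by
    simp_rw [Finset.card_filter]
    rw [Finset.sum_comm]
    rw [Finset.sum_congr rfl (g := fun _ => k)]
    · simp
    · intro π _
      rw [Equiv.sum_comp π (fun b : Fin n => if (π i : ℕ) % m = (b : ℕ) % m then 1 else 0),
        ← Finset.card_filter]
      exact aux_residue n m k hm hnm _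
  rw [← Finset.add_sum_erase _ _ (Finset.mem_univ i),
    Finset.sum_congr rfl (fun b hb => aux_sym n m i j b hij (Finset.ne_of_mem_erase hb).symm)] at key
  rw [Finset.sum_const, Finset.card_erase_of_mem (Finset.mem_univ i)] at key
  simp only [Finset.filter_true, Finset.card_univ, Fintype.card_fin, smul_eq_mul] at key
  generalize (Finset.univ.filter
        (fun π : Equiv.Perm (Fin n) => (π i : ℕ) % m = (π j : ℕ) % m)).card = C at key ⊢
  have hN : 0 < Fintype.card (Equiv.Perm (Fin n)) := Fintype.card_pos
  generalize Fintype.card (Equiv.Perm (Fin n)) = N at key hN ⊢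
  have key' : (N : ℝ) + ((n : ℝ) - 1) * C = N * k := by
    have := congrArg (Nat.cast : ℕ → ℝ) key
    push_cast [Nat.cast_sub (show 1 ≤ n by omega)] at this
    exact this
  have hn' : (n : ℝ) = k * m := by exact_mod_cast hnm
  have h1 : (0 : ℝ) < n - 1 := by
    have : (2 : ℝ) ≤ n := by exact_mod_cast hn
    linarith
  have h2 : (0 : ℝ) < m := by exact_mod_cast hm
  have h3 : (0 : ℝ) < N := by exact_mod_cast hN
  rw [div_eq_div_iff h3.ne' (by positivity)]
  linear_combination (m : ℝ) * key' - (N : ℝ) * hn'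
end

section
/- In the permuted-fold hash model with n = k·m (k ≥ 1 an integer) and n ≥ 2, for any x, y ∈ ℝⁿ the variance (over the random permutation π and the i.i.d. signs g) of the RPS estimator is Var[⟨x̂,ŷ⟩_RPS] = (1/m)·((n−m)/(n−1))·( ∑_{i≠j} x_i² y_j² + ∑_{i≠j} x_i y_i x_j y_j ). -/
open Finset

noncomputable def rpsSg {n : ℕ} (s : Fin n → Bool) (i : Fin n) : ℝ := if s i then 1 else -1

lemma rpsSg_sq {n : ℕ} (s : Fin n → Bool) (i : Fin n) : rpsSg s i * rpsSg s i = 1 := by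
  unfold rpsSg; split_ifs <;> norm_num

def rpsFlip {n : ℕ} (i : Fin n) (s : Fin n → Bool) : Fin n → Bool := Function.update s i (!s i)

lemma rpsFlip_inv {n : ℕ} (i : Fin n) : Function.Involutive (rpsFlip (n := n) i) := by
  intro s; simp [rpsFlip]

lemma rpsSg_flip_self {n : ℕ} (s : Fin n → Bool) (i : Fin n) :
    rpsSg (rpsFlip i s) i = - rpsSg s i := by
  unfold rpsSg rpsFlip; cases h : s i <;> simp

lemma rpsSg_flip_ne {n : ℕ} (s : Fin n → Bool) (i j : Fin n) (h : j ≠ i) :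
    rpsSg (rpsFlip i s) j = rpsSg s j := by
  unfold rpsSg rpsFlip; simp [h]

lemma rps_sum_zero {n : ℕ} (i : Fin n) (f : (Fin n → Bool) → ℝ)
    (h : ∀ s, f (rpsFlip i s) = - f s) : ∑ s, f s = 0 := by
  have h1 : ∑ s, f (rpsFlip i s) = ∑ s, f s :=
    Equiv.sum_comp (Function.Involutive.toPerm _ (rpsFlip_inv i)) f
  simp only [h, sum_neg_distrib] at h1
  linarith

lemma rps_m2 {n : ℕ} (i j : Fin n) :
    ∑ s : Fin n → Bool, rpsSg s i * rpsSg s j = if i = j then (2:ℝ)^n else 0 := by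
  split_ifs with h
  · subst h; simp [rpsSg_sq]
  · apply rps_sum_zero i
    intro s
    rw [rpsSg_flip_self, rpsSg_flip_ne _ _ _ (Ne.symm h)]; ring

lemma rps_m4 {n : ℕ} (i j k l : Fin n) (hij : i ≠ j) (hkl : k ≠ l) :
    ∑ s : Fin n → Bool, rpsSg s i * rpsSg s j * (rpsSg s k * rpsSg s l)
      = (if k = i ∧ l = j then (2:ℝ)^n else 0) + (if k = j ∧ l = i then (2:ℝ)^n else 0) := by
  by_cases h1 : k = i ∧ l = j
  · obtain ⟨rfl, rfl⟩ := h1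
    have : ∀ s : Fin n → Bool, rpsSg s k * rpsSg s l * (rpsSg s k * rpsSg s l) = 1 := by
      intro s
      calc _ = (rpsSg s k * rpsSg s k) * (rpsSg s l * rpsSg s l) := by ring
        _ = 1 := by simp [rpsSg_sq]
    simp [this, hij]
  by_cases h2 : k = j ∧ l = i
  · obtain ⟨rfl, rfl⟩ := h2
    have : ∀ s : Fin n → Bool, rpsSg s l * rpsSg s k * (rpsSg s k * rpsSg s l) = 1 := by
      intro s
      calc _ = (rpsSg s k * rpsSg s k) * (rpsSg s l * rpsSg s l) := by ring
        _ = 1 := by simp [rpsSg_sq]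
    simp [this, hij]
  rw [if_neg h1, if_neg h2, add_zero]
  by_cases hi : k ≠ i ∧ l ≠ i
  · apply rps_sum_zero i
    intro s
    rw [rpsSg_flip_self, rpsSg_flip_ne _ _ _ hij.symm, rpsSg_flip_ne _ _ _ hi.1,
      rpsSg_flip_ne _ _ _ hi.2]; ring
  · have hj : k ≠ j ∧ l ≠ j := by grind
    apply rps_sum_zero j
    intro s
    rw [rpsSg_flip_self, rpsSg_flip_ne _ _ _ hij, rpsSg_flip_ne _ _ _ hj.1,
      rpsSg_flip_ne _ _ _ hj.2]; ring

lemma rps_quad {n : ℕ} (a : Fin n → Fin n → ℝ) (ha : ∀ i, a i i = 0) :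
    ∑ s : Fin n → Bool, (∑ i, ∑ j, a i j * (rpsSg s i * rpsSg s j)) ^ 2
      = 2 ^ n * ∑ i, ∑ j, (a i j ^ 2 + a i j * a j i) := by
  have e : ∀ s : Fin n → Bool, (∑ i, ∑ j, a i j * (rpsSg s i * rpsSg s j)) ^ 2
      = ∑ i, ∑ j, ∑ k, ∑ l, a i j * a k l *
          (rpsSg s i * rpsSg s j * (rpsSg s k * rpsSg s l)) := by
    intro s
    rw [sq, sum_mul]
    refine sum_congr rfl fun i _ => ?_
    rw [sum_mul]
    refine sum_congr rfl fun j _ => ?_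
    rw [mul_sum]
    refine sum_congr rfl fun k _ => ?_
    rw [mul_sum]
    refine sum_congr rfl fun l _ => ?_
    ring
  simp only [e]
  rw [sum_comm, mul_sum]
  refine sum_congr rfl fun i _ => ?_
  rw [sum_comm, mul_sum]
  refine sum_congr rfl fun j _ => ?_
  rw [sum_comm]
  by_cases hij : i = j
  · subst hij; simp [ha]
  have : ∀ k ∈ (univ : Finset (Fin n)), ∑ s : Fin n → Bool, ∑ l, a i j * a k l *
          (rpsSg s i * rpsSg s j * (rpsSg s k * rpsSg s l))
      = ∑ l, ((if k = i then if l = j then a i j * a k l * (2:ℝ)^n else 0 else 0) +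
        (if k = j then if l = i then a i j * a k l * (2:ℝ)^n else 0 else 0)) := by
    intro k _
    rw [sum_comm]
    refine sum_congr rfl fun l _ => ?_
    rw [← mul_sum]
    by_cases hkl : k = l
    · subst hkl; simp [ha]
    · rw [rps_m4 i j k l hij hkl, mul_add]
      simp only [ite_and, mul_ite, mul_zero]
  rw [sum_congr rfl this]
  simp only [sum_add_distrib]
  have z : ∀ (u v : Fin n), ∑ k, ∑ l, (if k = u then if l = v then a i j * a k l * (2:ℝ)^n
      else 0 else 0) = a i j * a u v * 2 ^ n := by
    intro u v
    rw [sum_eq_single u (by intro b _ hb; simp [hb]) (by simp)]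
    simp
  rw [z, z]; ring

noncomputable def rpsI {n : ℕ} (m : ℕ) (π : Equiv.Perm (Fin n)) (i j : Fin n) : ℝ :=
  if (π i : ℕ) % m = (π j : ℕ) % m then (1 : ℝ) else 0

lemma rps_count (n m k : ℕ) (hnm : n = k * m) (hm : 0 < m) (a : ℕ) :
    ∑ b : Fin n, (if a % m = (b : ℕ) % m then (1 : ℝ) else 0) = k := by
  rw [Fin.sum_univ_eq_sum_range (fun b => if a % m = b % m then (1 : ℝ) else 0) n, hnm]
  clear hnm
  induction k with
  | zero => simp
  | succ k ih =>
    rw [Nat.succ_mul, sum_range_add, ih]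
    simp only [Nat.mul_add_mod_self_right, Nat.cast_add, Nat.cast_one, add_right_inj]
    rw [sum_eq_single (a % m)]
    · simp
    · intro b hb hne
      rw [mem_range] at hb
      rw [Nat.mod_eq_of_lt hb, if_neg (Ne.symm hne)]
    · intro h; exact absurd (mem_range.2 (Nat.mod_lt _ hm)) h

lemma rps_perm (n m k : ℕ) (hnm : n = k * m) (hn : 2 ≤ n) (i j : Fin n) (hij : i ≠ j) :
    ∑ π : Equiv.Perm (Fin n), rpsI m π i j
      = (Fintype.card (Equiv.Perm (Fin n)) : ℝ) *
        ((1 / (m : ℝ)) * (((n : ℝ) - (m : ℝ)) / ((n : ℝ) - 1))) := by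
  have hm : 0 < m := by
    rcases Nat.eq_zero_or_pos m with h | h
    · subst h; simp at hnm; omega
    · exact h
  have hs : ∀ j' , j' ≠ i → ∑ π : Equiv.Perm (Fin n), rpsI m π i j'
      = ∑ π : Equiv.Perm (Fin n), rpsI m π i j := by
    intro j' hj'
    rw [← Equiv.sum_comp (Equiv.mulRight (Equiv.swap j j'))]
    refine sum_congr rfl fun π _ => ?_
    simp [rpsI, Equiv.swap_apply_of_ne_of_ne hij hj'.symm]
  have h1 : ∑ j', ∑ π : Equiv.Perm (Fin n), rpsI m π i j'
      = (Fintype.card (Equiv.Perm (Fin n)) : ℝ) * k := by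
    rw [sum_comm]
    have : ∀ π : Equiv.Perm (Fin n), ∑ j', rpsI m π i j' = k := by
      intro π
      rw [← rps_count n m k hnm hm (π i)]
      exact Equiv.sum_comp π (fun b : Fin n => if (π i : ℕ) % m = (b : ℕ) % m then (1 : ℝ) else 0)
    simp [this]
  rw [← add_sum_erase _ _ (mem_univ i), sum_congr rfl (fun j' hj' => hs j' (ne_of_mem_erase hj'))]
    at h1
  have h2 : ∑ π : Equiv.Perm (Fin n), rpsI m π i i
      = (Fintype.card (Equiv.Perm (Fin n)) : ℝ) := by simp [rpsI]
  rw [h2, sum_const, card_erase_of_mem (mem_univ i), card_univ, Fintype.card_fin, nsmul_eq_mul,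
    Nat.cast_sub (by omega), Nat.cast_one] at h1
  have hn1 : (n : ℝ) - 1 ≠ 0 := by
    have : (2 : ℝ) ≤ n := by exact_mod_cast hn
    linarith
  have hm0 : (m : ℝ) ≠ 0 := by positivity
  have hnk : (n : ℝ) = k * m := by exact_mod_cast hnm
  have h3 : ∑ π : Equiv.Perm (Fin n), rpsI m π i j
      = (Fintype.card (Equiv.Perm (Fin n)) : ℝ) * (k - 1) / ((n : ℝ) - 1) := by
    rw [eq_div_iff hn1]; linarith
  have h4 : (n : ℝ) - m = m * (k - 1) := by rw [hnk]; ring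
  rw [h3, h4]
  field_simp

/-- Variance of the RPS inner-product estimator in the permuted-fold hash model with
`n = k·m` (`k ≥ 1`), `n ≥ 2`: the variance over the uniformly random permutation `π`
(giving the hash `h(i) = π(i) mod m`) and the i.i.d. uniform signs `g` equals
`(1/m)·((n−m)/(n−1))·( ∑_{i≠j} x_i² y_j² + ∑_{i≠j} x_i y_i x_j y_j )`. -/
theorem rps_estimator_variance (n m k : ℕ) (hk : 1 ≤ k) (hnm : n = k * m) (hn : 2 ≤ n)
    (x y : Fin n → ℝ) :
    (let sgn : (Fin n → Bool) → Fin n → ℝ := fun s i => if s i then 1 else -1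
     let est : Equiv.Perm (Fin n) → (Fin n → Bool) → ℝ := fun π s =>
       ∑ i, ∑ i', x i * y i' * sgn s i * sgn s i' *
         (if (π i : ℕ) % m = (π i' : ℕ) % m then (1 : ℝ) else 0)
     let N : ℝ := (Fintype.card (Equiv.Perm (Fin n)) : ℝ) * (2 : ℝ) ^ n
     let μ : ℝ := (∑ π : Equiv.Perm (Fin n), ∑ s : Fin n → Bool, est π s) / N
     (∑ π : Equiv.Perm (Fin n), ∑ s : Fin n → Bool, (est π s - μ) ^ 2) / N)
      = (1 / (m : ℝ)) * (((n : ℝ) - (m : ℝ)) / ((n : ℝ) - 1)) *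
          ((∑ i, ∑ j ∈ Finset.univ \ {i}, (x i) ^ 2 * (y j) ^ 2)
            + ∑ i, ∑ j ∈ Finset.univ \ {i}, x i * y i * (x j * y j)) := by
  extract_lets sgn est N μ
  have hN : N ≠ 0 := by
    have : (0:ℝ) < Fintype.card (Equiv.Perm (Fin n)) := by exact_mod_cast Fintype.card_pos
    positivity
  have hest : ∀ π s, est π s = ∑ i, ∑ j, (x i * y j * rpsI m π i j) * (rpsSg s i * rpsSg s j) := by
    intro π s
    refine sum_congr rfl fun i _ => sum_congr rfl fun j _ => ?_
    change x i * y j * rpsSg s i * rpsSg s j * rpsI m π i j = _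
    ring
  have hμ : μ = ∑ i, x i * y i := by
    have h : ∀ π, ∑ s, est π s = (∑ i, x i * y i) * 2 ^ n := by
      intro π
      simp only [hest]
      rw [sum_comm, sum_mul]
      refine sum_congr rfl fun i _ => ?_
      rw [sum_comm]
      simp only [← mul_sum, rps_m2]
      simp [rpsI]
    change (∑ π, ∑ s, est π s) / N = _
    rw [div_eq_iff hN]
    simp only [h, sum_const, card_univ, nsmul_eq_mul]
    change _ = _ * ((Fintype.card (Equiv.Perm (Fin n)) : ℝ) * (2 : ℝ) ^ n)
    ring
  let a : Equiv.Perm (Fin n) → Fin n → Fin n → ℝ := fun π i j =>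
    if i = j then 0 else x i * y j * rpsI m π i j
  have hdiff : ∀ π s, est π s - μ = ∑ i, ∑ j, a π i j * (rpsSg s i * rpsSg s j) := by
    intro π s
    rw [hest, hμ, ← sum_sub_distrib]
    refine sum_congr rfl fun i _ => ?_
    rw [sub_eq_iff_eq_add, ← add_sum_erase _ _ (mem_univ i),
      ← add_sum_erase univ (fun j => a π i j * (rpsSg s i * rpsSg s j)) (mem_univ i)]
    have : ∑ j ∈ univ.erase i, (x i * y j * rpsI m π i j) * (rpsSg s i * rpsSg s j)
        = ∑ j ∈ univ.erase i, a π i j * (rpsSg s i * rpsSg s j) := by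
      refine sum_congr rfl fun j hj => ?_
      simp [a, (ne_of_mem_erase hj).symm]
    rw [this]
    simp [a, rpsSg_sq, rpsI]
    ring
  set p : ℝ := (1 / (m : ℝ)) * (((n : ℝ) - (m : ℝ)) / ((n : ℝ) - 1)) with hp
  rw [div_eq_iff hN]
  simp only [hdiff]
  rw [sum_congr rfl (fun π _ => rps_quad (a π) (by intro i; simp [a])), ← mul_sum, sum_comm,
    ← sum_add_distrib, mul_sum, mul_sum, sum_mul]
  refine sum_congr rfl fun i _ => ?_
  rw [sum_comm, ← add_sum_erase _ _ (mem_univ i), ← sum_add_distrib, sdiff_singleton_eq_erase,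
    mul_sum, sum_mul]
  have h0 : ∑ π, (a π i i ^ 2 + a π i i * a π i i) = 0 := by simp [a]
  rw [h0, zero_add, mul_sum]
  refine sum_congr rfl fun j hj => ?_
  have hij : i ≠ j := (ne_of_mem_erase hj).symm
  have h1 : ∀ π, a π i j ^ 2 + a π i j * a π j i
      = (x i ^ 2 * y j ^ 2 + x i * y i * (x j * y j)) * rpsI m π i j := by
    intro π
    simp only [a, if_neg hij, if_neg hij.symm, rpsI, eq_comm (a := (π j : ℕ) % m)]
    split_ifs <;> ring
  simp only [h1]
  rw [← mul_sum, rps_perm n m k hnm hn i j hij, ← hp]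
  change _ = _ * ((Fintype.card (Equiv.Perm (Fin n)) : ℝ) * (2 : ℝ) ^ n)
  ring
end

section
/- For any x ∈ ℝⁿ with n ≥ 2 and any 1 ≤ m ≤ n, the variance of the pruning estimator of the squared norm over a uniformly random size-m subset S of {1,…,n} is Var[(n/m)·∑_{i∈S} x_i²] = (n/m − 1)·∑_{i=1}ⁿ x_i⁴ + ((m−n)/(m(n−1)))·∑_{i≠j} x_i² x_j². -/
open Finset

theorem prune_count (n m : ℕ) (T : Finset (Fin n)) (hT : T.card ≤ m) :
    ((powersetCard m (univ : Finset (Fin n))).filter (fun S => T ⊆ S)).card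
      = (n - T.card).choose (m - T.card) := by
  have h : (powersetCard (m - T.card) (univ \ T)).card = (n - T.card).choose (m - T.card) := by
    rw [card_powersetCard, card_sdiff_of_subset (subset_univ _), card_univ, Fintype.card_fin]
  rw [← h]
  apply card_nbij' (fun S => S \ T) (fun S => S ∪ T)
  · intro S hS
    simp only [coe_filter, mem_powersetCard, Set.mem_ofPred_eq] at hS
    simp only [mem_coe, mem_powersetCard]
    refine ⟨sdiff_subset_sdiff (subset_univ _) (le_refl _), ?_⟩
    rw [card_sdiff_of_subset hS.2, hS.1.2]
  · intro S hS
    simp only [mem_coe, mem_powersetCard] at hS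
    simp only [coe_filter, mem_powersetCard, Set.mem_ofPred_eq]
    refine ⟨⟨subset_univ _, ?_⟩, subset_union_right⟩
    have hd : Disjoint S T := (subset_sdiff.1 hS.1).2
    rw [card_union_of_disjoint hd, hS.2]; omega
  · intro S hS
    simp only [coe_filter, mem_powersetCard, Set.mem_ofPred_eq] at hS
    exact sdiff_union_of_subset hS.2
  · intro S hS
    simp only [mem_coe, mem_powersetCard] at hS
    have hd : Disjoint S T := (subset_sdiff.1 hS.1).2
    exact union_sdiff_cancel_right hd

theorem prune_count1 (n m : ℕ) (hm1 : 1 ≤ m) (i : Fin n) :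
    (n : ℝ) * ((powersetCard m (univ : Finset (Fin n))).filter (fun S => i ∈ S)).card
      = m * (n.choose m : ℝ) := by
  have h := prune_count n m {i} (by simpa using hm1)
  simp only [singleton_subset_iff, card_singleton] at h
  rw [h]
  have hn : 0 < n := i.pos
  obtain ⟨n, rfl⟩ : ∃ k, n = k + 1 := ⟨n - 1, by omega⟩
  obtain ⟨m, rfl⟩ : ∃ k, m = k + 1 := ⟨m - 1, by omega⟩
  have := Nat.add_one_mul_choose_eq n m
  simp only [Nat.add_sub_cancel]
  rw [mul_comm ((m + 1 : ℕ) : ℝ)]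
  exact_mod_cast this

theorem prune_count2 (n m : ℕ) (hm1 : 1 ≤ m) (i j : Fin n) (hij : i ≠ j) :
    (n : ℝ) * (n - 1) * ((powersetCard m (univ : Finset (Fin n))).filter
        (fun S => i ∈ S ∧ j ∈ S)).card
      = m * (m - 1) * (n.choose m : ℝ) := by
  have e : ∀ S : Finset (Fin n), ({i, j} : Finset (Fin n)) ⊆ S ↔ (i ∈ S ∧ j ∈ S) := by
    intro S; simp [insert_subset_iff]
  rcases Nat.lt_or_ge m 2 with hm | hm
  · have : m = 1 := by omega
    subst this
    have : ((powersetCard 1 (univ : Finset (Fin n))).filter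
        (fun S => i ∈ S ∧ j ∈ S)) = ∅ := by
      apply filter_eq_empty_iff.2
      intro S hS h
      have h1 := card_le_card ((e S).2 h)
      rw [card_pair hij, (mem_powersetCard.1 hS).2] at h1
      omega
    rw [this]; simp
  have h := prune_count n m {i, j} (by rw [card_pair hij]; exact hm)
  simp only [e, card_pair hij] at h
  rw [h]
  have hn : 2 ≤ n := by
    have := i.2; have := j.2
    have : i.1 ≠ j.1 := fun h => hij (Fin.ext h)
    omega
  obtain ⟨n, rfl⟩ : ∃ k, n = k + 2 := ⟨n - 2, by omega⟩
  obtain ⟨m, rfl⟩ : ∃ k, m = k + 2 := ⟨m - 2, by omega⟩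
  have h1 := Nat.add_one_mul_choose_eq n m
  have h2 := Nat.add_one_mul_choose_eq (n + 1) (m + 1)
  simp only [Nat.add_sub_cancel]
  have h1' : ((n : ℝ) + 1) * n.choose m = (n + 1).choose (m + 1) * (m + 1) := by
    exact_mod_cast h1
  have h2' : ((n : ℝ) + 1 + 1) * (n + 1).choose (m + 1)
      = (n + 2).choose (m + 2) * (m + 1 + 1) := by
    exact_mod_cast h2
  push_cast
  linear_combination ((n : ℝ) + 2) * h1' + ((m : ℝ) + 1) * h2'

theorem prune_sum1 (n m : ℕ) (hm1 : 1 ≤ m) (a : Fin n → ℝ) :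
    (n : ℝ) * ∑ S ∈ powersetCard m (univ : Finset (Fin n)), ∑ i ∈ S, a i
      = m * (n.choose m : ℝ) * ∑ i, a i := by
  have h : ∀ S : Finset (Fin n), ∑ i ∈ S, a i = ∑ i, if i ∈ S then a i else 0 := by
    intro S; simp
  simp_rw [h]
  rw [sum_comm, mul_sum, mul_sum]
  refine sum_congr rfl fun i _ => ?_
  rw [← sum_filter, sum_const, nsmul_eq_mul, ← mul_assoc, prune_count1 n m hm1]
  simp

theorem prune_sum2 (n m : ℕ) (hm1 : 1 ≤ m) (a : Fin n → ℝ) :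
    (n : ℝ) * (n - 1) * ∑ S ∈ powersetCard m (univ : Finset (Fin n)),
        ∑ i ∈ S, ∑ j ∈ S \ {i}, a i * a j
      = m * (m - 1) * (n.choose m : ℝ) * ∑ i, ∑ j ∈ univ \ {i}, a i * a j := by
  have h : ∀ S : Finset (Fin n), ∑ i ∈ S, ∑ j ∈ S \ {i}, a i * a j
      = ∑ i, ∑ j ∈ univ \ {i}, if i ∈ S ∧ j ∈ S then a i * a j else 0 := by
    intro S
    rw [← sum_filter_add_sum_filter_not univ (fun i => i ∈ S)]
    rw [sum_eq_zero (s := univ.filter (fun i => ¬ i ∈ S))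
      (fun i hi => sum_eq_zero fun j _ => by simp [(mem_filter.1 hi).2]), add_zero]
    refine sum_congr (by ext; simp) fun i hi => ?_
    rw [← sum_filter]
    refine sum_congr ?_ fun _ _ => rfl
    ext j
    have hi' : i ∈ S := (mem_filter.1 hi).2
    simp [hi', and_comm]
  simp_rw [h]
  rw [sum_comm, mul_sum, mul_sum]
  refine sum_congr rfl fun i _ => ?_
  rw [sum_comm, mul_sum, mul_sum]
  refine sum_congr rfl fun j hj => ?_
  have hij : i ≠ j := by
    rintro rfl
    simp at hj
  rw [← sum_filter, sum_const, nsmul_eq_mul, ← mul_assoc, prune_count2 n m hm1 i j hij]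
  simp

theorem prune_sq (n : ℕ) (S : Finset (Fin n)) (a : Fin n → ℝ) :
    (∑ i ∈ S, a i) ^ 2 = ∑ i ∈ S, a i ^ 2 + ∑ i ∈ S, ∑ j ∈ S \ {i}, a i * a j := by
  rw [sq, sum_mul_sum, ← sum_add_distrib]
  refine sum_congr rfl fun i hi => ?_
  rw [sum_eq_add_sum_sdiff_singleton_of_mem hi, sq]

/-- Variance of the pruning estimator of the squared norm over a uniformly random
size-`m` subset `S` of `{1,…,n}`:
`Var[(n/m)·∑_{i∈S} x_i²] = (n/m − 1)·∑ x_i⁴ + ((m−n)/(m(n−1)))·∑_{i≠j} x_i² x_j²`. -/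
theorem pruning_norm_estimator_variance (n m : ℕ) (hn : 2 ≤ n) (hm1 : 1 ≤ m) (hmn : m ≤ n)
    (x : Fin n → ℝ) :
    (let est : Finset (Fin n) → ℝ := fun S => ((n : ℝ) / (m : ℝ)) * ∑ i ∈ S, (x i) ^ 2
     let 𝒮 : Finset (Finset (Fin n)) := Finset.powersetCard m (Finset.univ : Finset (Fin n))
     let μ : ℝ := (∑ S ∈ 𝒮, est S) / (𝒮.card : ℝ)
     (∑ S ∈ 𝒮, (est S - μ) ^ 2) / (𝒮.card : ℝ))
      = ((n : ℝ) / (m : ℝ) - 1) * ∑ i, (x i) ^ 4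
        + (((m : ℝ) - (n : ℝ)) / ((m : ℝ) * ((n : ℝ) - 1))) *
            ∑ i, ∑ j ∈ Finset.univ \ {i}, (x i) ^ 2 * (x j) ^ 2 := by
  have hn0 : (n : ℝ) ≠ 0 := by positivity
  have hm0 : (m : ℝ) ≠ 0 := by positivity
  have hn1 : (n : ℝ) - 1 ≠ 0 := by
    have : (2 : ℝ) ≤ n := by exact_mod_cast hn
    intro h; linarith
  have hN : (n.choose m : ℝ) ≠ 0 := by
    exact_mod_cast (Nat.choose_pos hmn).ne'
  have h1 := prune_sum1 n m hm1 (fun i => x i ^ 2)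
  have h2 := prune_sum1 n m hm1 (fun i => (x i ^ 2) ^ 2)
  have h3 := prune_sum2 n m hm1 (fun i => x i ^ 2)
  have h4 := prune_sq n univ (fun i => x i ^ 2)
  have h5 : ∑ S ∈ powersetCard m (univ : Finset (Fin n)), (∑ i ∈ S, x i ^ 2) ^ 2
      = ∑ S ∈ powersetCard m (univ : Finset (Fin n)), ∑ i ∈ S, (x i ^ 2) ^ 2
        + ∑ S ∈ powersetCard m (univ : Finset (Fin n)),
          ∑ i ∈ S, ∑ j ∈ S \ {i}, x i ^ 2 * x j ^ 2 := by
    rw [← sum_add_distrib]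
    exact sum_congr rfl fun S _ => prune_sq n S _
  have h6 : ∑ i, x i ^ 4 = ∑ i, (x i ^ 2) ^ 2 := sum_congr rfl fun i _ => by ring
  have hc : ((powersetCard m (univ : Finset (Fin n))).card : ℝ) = n.choose m := by
    rw [card_powersetCard, card_univ, Fintype.card_fin]
  have h7 : ∀ c μ : ℝ, ∑ S ∈ powersetCard m (univ : Finset (Fin n)),
      (c * ∑ i ∈ S, x i ^ 2 - μ) ^ 2
      = c ^ 2 * ∑ S ∈ powersetCard m (univ : Finset (Fin n)), (∑ i ∈ S, x i ^ 2) ^ 2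
        - 2 * c * μ * ∑ S ∈ powersetCard m (univ : Finset (Fin n)), ∑ i ∈ S, x i ^ 2
        + n.choose m * μ ^ 2 := by
    intro c μ
    rw [← hc, ← nsmul_eq_mul, ← sum_const, mul_sum, mul_sum, ← sum_sub_distrib,
      ← sum_add_distrib]
    exact sum_congr rfl fun S _ => by ring
  dsimp only at h1 h2 h3 h4 ⊢
  rw [h7, hc, ← mul_sum, h5, h6]
  generalize (∑ S ∈ powersetCard m (univ : Finset (Fin n)), ∑ i ∈ S, x i ^ 2) = P at *
  generalize (∑ S ∈ powersetCard m (univ : Finset (Fin n)), ∑ i ∈ S, (x i ^ 2) ^ 2) = Q at *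
  generalize (∑ S ∈ powersetCard m (univ : Finset (Fin n)),
          ∑ i ∈ S, ∑ j ∈ S \ {i}, x i ^ 2 * x j ^ 2) = R at *
  generalize (∑ i, ∑ j ∈ univ \ {i}, x i ^ 2 * x j ^ 2) = B at *
  generalize (∑ i, (x i ^ 2) ^ 2) = A at *
  generalize (∑ i, x i ^ 2) = s at *
  generalize (n.choose m : ℝ) = N at *
  have e1 : P = m * N * s / n := by field_simp; linarith
  have e2 : Q = m * N * A / n := by field_simp; linarith
  have e3 : R = m * (m - 1) * N * B / (n * (n - 1)) := by field_simp; linarith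
  have e4 : A = s ^ 2 - B := by linarith
  rw [e1, e2, e3, e4]
  field_simp
  ring
end

section
/- Let n ≥ 2, 1 ≤ m < n, and σ_1,…,σ_n ≥ 0. Then ((n−m)/m)·∑_{i=1}ⁿ σ_i⁴ ≥ (1/m)·((n−m)/(n−1))·∑_{i≠j} σ_i² σ_j², with equality if and only if σ_1 = σ_2 = … = σ_n. Consequently the expected (over mean-zero independent data with coordinate standard deviations σ_i) variance of the pruning inner-product estimator is at least that of the RPS inner-product estimator, with equality exactly when all σ_i are equal. -/
open Finset

/-- For `n ≥ 2`, `1 ≤ m < n` and nonnegative `σ_1,…,σ_n`: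
`((n−m)/m)·∑ σ_i⁴ ≥ (1/m)·((n−m)/(n−1))·∑_{i≠j} σ_i² σ_j²`, with equality iff all the
`σ_i` are equal; i.e. the expected pruning-estimator variance is at least the expected
RPS-estimator variance, with equality exactly when all `σ_i` coincide. -/
theorem expected_pruning_variance_ge_rps (n m : ℕ) (hn : 2 ≤ n) (hm1 : 1 ≤ m) (hmn : m < n)
    (σ : Fin n → ℝ) (hσ : ∀ i, 0 ≤ σ i) :
    (1 / (m : ℝ)) * (((n : ℝ) - (m : ℝ)) / ((n : ℝ) - 1)) *
        ∑ i, ∑ j ∈ Finset.univ \ {i}, (σ i) ^ 2 * (σ j) ^ 2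
      ≤ (((n : ℝ) - (m : ℝ)) / (m : ℝ)) * ∑ i, (σ i) ^ 4
    ∧ ((((n : ℝ) - (m : ℝ)) / (m : ℝ)) * ∑ i, (σ i) ^ 4
        = (1 / (m : ℝ)) * (((n : ℝ) - (m : ℝ)) / ((n : ℝ) - 1)) *
            ∑ i, ∑ j ∈ Finset.univ \ {i}, (σ i) ^ 2 * (σ j) ^ 2
        ↔ ∀ i j, σ i = σ j) := by
  have hP : ∑ i, ∑ j ∈ Finset.univ \ {i}, (σ i) ^ 2 * (σ j) ^ 2
      = (∑ i, (σ i) ^ 2) * (∑ i, (σ i) ^ 2) - ∑ i, (σ i) ^ 4 := by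
    rw [Finset.sum_mul_sum, ← Finset.sum_sub_distrib]
    refine Finset.sum_congr rfl fun i _ => ?_
    have h := Finset.sum_sdiff (f := fun j => (σ i) ^ 2 * (σ j) ^ 2)
      (Finset.subset_univ ({i} : Finset (Fin n)))
    rw [Finset.sum_singleton] at h
    rw [← h]
    ring
  have hD : ∑ i, ∑ j, ((σ i) ^ 2 - (σ j) ^ 2) ^ 2
      = 2 * (n * ∑ i, (σ i) ^ 4 - (∑ i, (σ i) ^ 2) * (∑ i, (σ i) ^ 2)) := by
    have h1 : ∀ i j, ((σ i) ^ 2 - (σ j) ^ 2) ^ 2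
        = (σ i) ^ 4 + (σ j) ^ 4 - 2 * ((σ i) ^ 2 * (σ j) ^ 2) := fun i j => by ring
    simp only [h1, Finset.sum_sub_distrib, Finset.sum_add_distrib, ← Finset.mul_sum,
      ← Finset.sum_mul, Finset.sum_const, Finset.card_univ, Fintype.card_fin, nsmul_eq_mul]
    ring
  have hm0 : (0 : ℝ) < m := by exact_mod_cast hm1
  have hn1 : (0 : ℝ) < (n : ℝ) - 1 := by
    have : (2 : ℝ) ≤ n := by exact_mod_cast hn
    linarith
  have hnm : (0 : ℝ) < (n : ℝ) - m := by
    have : (m : ℝ) < n := by exact_mod_cast hmn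
    linarith
  have hc : 0 < ((n : ℝ) - m) / (2 * m * (n - 1)) := by positivity
  have key : (((n : ℝ) - (m : ℝ)) / (m : ℝ)) * ∑ i, (σ i) ^ 4
      - (1 / (m : ℝ)) * (((n : ℝ) - (m : ℝ)) / ((n : ℝ) - 1)) *
        ∑ i, ∑ j ∈ Finset.univ \ {i}, (σ i) ^ 2 * (σ j) ^ 2
      = ((n : ℝ) - m) / (2 * m * (n - 1)) * ∑ i, ∑ j, ((σ i) ^ 2 - (σ j) ^ 2) ^ 2 := by
    rw [hP, hD]
    have := hn1.ne'
    field_simp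
    ring
  have hD0 : 0 ≤ ∑ i, ∑ j, ((σ i) ^ 2 - (σ j) ^ 2) ^ 2 :=
    Finset.sum_nonneg fun i _ => Finset.sum_nonneg fun j _ => sq_nonneg _
  constructor
  · rw [← sub_nonneg, key]
    positivity
  · rw [← sub_eq_zero, key, mul_eq_zero, or_iff_right hc.ne']
    constructor
    · intro h i j
      rw [Finset.sum_eq_zero_iff_of_nonneg
        fun i _ => Finset.sum_nonneg fun j _ => sq_nonneg _] at h
      have h2 := h i (Finset.mem_univ i)
      rw [Finset.sum_eq_zero_iff_of_nonneg fun j _ => sq_nonneg _] at h2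
      have h3 := sub_eq_zero.mp (pow_eq_zero_iff two_ne_zero |>.mp (h2 j (Finset.mem_univ j)))
      exact (pow_left_inj₀ (hσ i) (hσ j) two_ne_zero).mp h3
    · intro h
      refine Finset.sum_eq_zero fun i _ => Finset.sum_eq_zero fun j _ => ?_
      rw [h i j]
      ring
end

section
/- Optimal load of RANDOMFOLD: for any n, m ≥ 1 and any function u : ℕ → ℕ, the map h_u : {0,…,n−1} → {0,…,m−1} defined by h_u(x) = (u(⌊x/m⌋) + (x mod m)) mod m satisfies, for every bucket j ∈ {0,…,m−1}, |{x ∈ {0,…,n−1} : h_u(x) = j}| ≤ ⌈n/m⌉. -/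
open Finset

/-- Optimal load of RANDOMFOLD: for `n, m ≥ 1` and any `u : ℕ → ℕ`, the map
`h_u(x) = (u(⌊x/m⌋) + (x mod m)) mod m` on `{0,…,n−1}` sends at most `⌈n/m⌉` elements
to each bucket `j ∈ {0,…,m−1}`. -/
theorem randomfold_optimal_load (n m : ℕ) (hn : 1 ≤ n) (hm : 1 ≤ m) (u : ℕ → ℕ)
    (j : ℕ) (hj : j < m) :
    ((Finset.range n).filter (fun x => (u (x / m) + x % m) % m = j)).card ≤ n ⌈/⌉ m := by
  have hn' : n ≤ m * (n ⌈/⌉ m) := by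
    have h := le_smul_ceilDiv (a := m) (b := n) hm
    simpa using h
  calc _ ≤ (Finset.range (n ⌈/⌉ m)).card := by
        apply Finset.card_le_card_of_injOn (fun x => x / m)
        · intro x hx
          simp only [Finset.coe_filter, Finset.mem_range, Set.mem_setOf_eq] at hx
          simp only [Finset.coe_range, Set.mem_Iio]
          exact Nat.div_lt_of_lt_mul (lt_of_lt_of_le hx.1 hn')
        · intro x hx y hy hxy
          simp only [Finset.coe_filter, Finset.mem_range, Set.mem_setOf_eq] at hx hy
          have hxy' : x / m = y / m := hxy
          have h : (u (y / m) + x % m) ≡ (u (y / m) + y % m) [MOD m] := by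
            have h1 := hx.2
            rw [hxy'] at h1
            exact h1.trans hy.2.symm
          have h2 : x % m = y % m := by
            have h3 := Nat.ModEq.add_left_cancel' _ h
            simpa [Nat.ModEq] using h3
          rw [← Nat.div_add_mod x m, ← Nat.div_add_mod y m, hxy', h2]
    _ = _ := Finset.card_range _
end

section
/- Optimal residual of an RPS-compressed linear model: in a real inner product space, let y satisfy ‖y‖ = σ_y > 0, let x_1,…,x_n be pairwise orthogonal with ‖x_i‖ = σ_x > 0, set ρ_i = ⟨y, x_i⟩/(σ_x σ_y), let n = k·m, let h : {1,…,n} → {1,…,m} be a hash with exactly k indices in every bucket, and let g : {1,…,n} → {−1,+1}. Then the infimum over β ∈ ℝ^m of ‖y − ∑_{j=1}^m β_j (∑_{i : h(i)=j} g(i) x_i)‖² equals σ_y²·(1 − (1/k)·∑_{j=1}^m (∑_{i : h(i)=j} g(i) ρ_i)²). -/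
open Finset
open scoped RealInnerProductSpace

/-- Optimal residual of an RPS-compressed linear model: in a real inner product space,
with `‖y‖ = σ_y > 0`, pairwise orthogonal `x_1,…,x_n` with `‖x_i‖ = σ_x > 0`,
correlations `ρ_i = ⟪y, x_i⟫/(σ_x σ_y)`, `n = k·m`, a hash `h` with exactly `k`
indices per bucket, and signs `g(i) ∈ {−1,+1}`, the infimum over `β ∈ ℝᵐ` of
`‖y − ∑_j β_j (∑_{i : h(i)=j} g(i) x_i)‖²` equals
`σ_y²(1 − (1/k)·∑_j (∑_{i : h(i)=j} g(i) ρ_i)²)`. -/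
theorem rps_linear_model_residual {E : Type*} [NormedAddCommGroup E]
    [InnerProductSpace ℝ E] (n m k : ℕ) (hk : 0 < k) (hnm : n = k * m)
    (y : E) (x : Fin n → E) (σx σy : ℝ)
    (hσx : 0 < σx) (hσy : 0 < σy) (hy : ‖y‖ = σy) (hx : ∀ i, ‖x i‖ = σx)
    (horth : ∀ i j, i ≠ j → ⟪x i, x j⟫ = 0)
    (ρ : Fin n → ℝ) (hρ : ∀ i, ρ i = ⟪y, x i⟫ / (σx * σy))
    (h : Fin n → Fin m) (hload : ∀ j, (Finset.univ.filter (fun i => h i = j)).card = k)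
    (g : Fin n → ℝ) (hg : ∀ i, g i = 1 ∨ g i = -1) :
    IsGLB
      {r : ℝ | ∃ β : Fin m → ℝ,
        r = ‖y - ∑ j, β j • (∑ i ∈ Finset.univ.filter (fun i => h i = j), g i • x i)‖ ^ 2}
      (σy ^ 2 * (1 - (1 / (k : ℝ)) *
        ∑ j, (∑ i ∈ Finset.univ.filter (fun i => h i = j), g i * ρ i) ^ 2)) := by
  set z : Fin m → E := fun j => ∑ i ∈ Finset.univ.filter (fun i => h i = j), g i • x i with hz
  set S : Fin m → ℝ := fun j => ∑ i ∈ Finset.univ.filter (fun i => h i = j), g i * ρ i with hS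
  have hk' : (0 : ℝ) < k := by exact_mod_cast hk
  have hyz : ∀ j, ⟪y, z j⟫ = σx * σy * S j := by
    intro j
    simp only [hz, hS, inner_sum, Finset.mul_sum, real_inner_smul_right]
    refine Finset.sum_congr rfl fun i _ => ?_
    rw [hρ]
    field_simp
  have hxz : ∀ i j, ⟪x i, z j⟫ = if h i = j then g i * σx ^ 2 else 0 := by
    intro i j
    simp only [hz, inner_sum, real_inner_smul_right]
    have h1 : ∀ l, g l * ⟪x i, x l⟫ = if i = l then g i * σx ^ 2 else 0 := by
      intro l
      by_cases hl : i = l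
      · subst hl
        simp [hx]
      · simp [hl, horth i l hl]
    simp only [h1, Finset.sum_ite_eq]
    simp
  have hzz : ∀ j l, ⟪z j, z l⟫ = if j = l then (k : ℝ) * σx ^ 2 else 0 := by
    intro j l
    have h0 : ⟪z j, z l⟫ = ∑ i ∈ Finset.univ.filter (fun i => h i = j), g i * ⟪x i, z l⟫ := by
      conv_lhs => rw [hz]
      simp only [sum_inner, real_inner_smul_left]
      rfl
    have h2 : ∀ i ∈ Finset.univ.filter (fun i => h i = j),
        g i * ⟪x i, z l⟫ = if j = l then σx ^ 2 else 0 := by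
      intro i hi
      have hi' : h i = j := by simpa using hi
      rw [hxz, hi']
      split_ifs
      · rcases hg i with e | e <;> rw [e] <;> ring
      · simp
    rw [h0, Finset.sum_congr rfl h2, Finset.sum_const, hload]
    split_ifs <;> simp
  have key : ∀ β : Fin m → ℝ, ‖y - ∑ j, β j • z j‖ ^ 2 =
      σy ^ 2 * (1 - (1 / (k : ℝ)) * ∑ j, S j ^ 2) +
        ∑ j, (k : ℝ) * σx ^ 2 * (β j - σy * S j / (k * σx)) ^ 2 := by
    intro β
    have e1 : ⟪y, ∑ j, β j • z j⟫ = ∑ j, β j * (σx * σy * S j) := by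
      simp only [inner_sum, real_inner_smul_right, hyz]
    have e2 : ‖∑ j, β j • z j‖ ^ 2 = ∑ j, β j ^ 2 * (k * σx ^ 2) := by
      rw [← real_inner_self_eq_norm_sq]
      simp only [inner_sum, sum_inner, real_inner_smul_right, real_inner_smul_left, hzz]
      refine Finset.sum_congr rfl fun j _ => ?_
      simp
      ring
    rw [norm_sub_sq_real, e1, e2, hy, mul_sub, mul_one, sub_add, sub_add, Finset.mul_sum,
      Finset.mul_sum, Finset.mul_sum, ← Finset.sum_sub_distrib, ← Finset.sum_sub_distrib]
    congr 1
    refine Finset.sum_congr rfl fun j _ => ?_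
    field_simp
    ring
  refine IsLeast.isGLB ⟨⟨fun j => σy * S j / (k * σx), ?_⟩, ?_⟩
  · rw [key]
    simp [hS]
  · rintro r ⟨β, rfl⟩
    rw [key]
    have : 0 ≤ ∑ j, (k : ℝ) * σx ^ 2 * (β j - σy * S j / (k * σx)) ^ 2 :=
      Finset.sum_nonneg fun j _ => by positivity
    linarith
end
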